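/- Let Q ≥ 2, κ ≥ 1 and n be positive integers with n < N = κQ. Then the congestion dynamics {σ(t)} on 𝒮_n is irreducible and aperiodic, and it is reversible with respect to the Gibbs measure μ_n, i.e. μ_n(σ)·p(σ,σ') = μ_n(σ')·p(σ',σ) for all σ, σ' ∈ 𝒮_n. Consequently μ_n is the unique stationary distribution of the chain, and for every initial state σ₀ the law of σ(t) converges to μ_n as t → ∞. -/

import Mathlib

/-!
Detailed balance for the congestion dynamics: when two configurations differ at player `i` only and
`η` counts the remaining players, the Gibbs weight of `σ` is a factor depending on `η` alone times
`(κ - η_{σ_i}) / (κ + 1)` (`exp_potF_eq`), while `p(σ, σ')` is proportional to `κ - η_{σ'_i}`. The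
product is symmetric in `σ, σ'` (`gibbs_reversible`), and since rows sum to one (`configP_row_sum`)
the Gibbs measure is stationary.

Irreducibility (`reachable`) is an induction on the number of players on which `σ` and the target `τ`
disagree. A misplaced player `i` is moved to `τ_i`; if `τ_i` is full, it contains another misplaced
player, which is first moved to a non-full resource (one exists because `n < κQ`). Aperiodicity holds
because every holding probability is positive (`configP_self_pos`).

Irreducibility and positive holding probabilities give a time `T` at which all transition
probabilities are at least some `ε > 0` (`exists_minorization`). Hence `T` steps contract the `ℓ¹`
norm on signed measures of mass zero (`evolve_l1_contract`), so such measures are driven to zero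
(`evolve_tendsto_zero`). Applied to the difference of a probability vector and the Gibbs measure this
yields convergence, and uniqueness of the stationary distribution as the case of a constant sequence.
-/

open scoped BigOperators
open Filter MeasureTheory

noncomputable section

namespace CongestionPaper

attribute [local instance 10] Classical.propDecidable

/-- Evolution of a distribution under a transition kernel `p` on a finite state space:
`evolve p mu t` is the law at time `t` of the Markov chain with transition matrix `p`
and initial distribution `mu`. -/
def evolve {X : Type*} [Fintype X] (p : X -> X -> Real) (mu : X -> Real) : Nat -> X -> Real
  | 0 => mu
  | (t+1) => fun y => ∑ x, evolve p mu t x * p x y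

/-- Point mass at `x0`. -/
def delta {X : Type*} (x0 : X) : X -> Real := fun x => if x = x0 then 1 else 0

/-- Total variation distance between two distributions on a finite type,
as the supremum over events `A` of the difference of probabilities of `A`. -/
def tvDist {X : Type*} [Fintype X] (mu nu : X -> Real) : Real :=
  ⨆ A : Finset X, |∑ x ∈ A, (mu x - nu x)|

/-- Total variation distance between the pushforwards of `mu` and `nu` under `m`. -/
def tvDistOn {X : Type*} [Fintype X] {Y : Type*} (m : X -> Y) (mu nu : X -> Real) : Real :=
  ⨆ B : Finset Y, |∑ x : X, (if m x ∈ B then mu x - nu x else 0)|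

/-- Worst-case (over the initial state) total variation distance to `pi` at time `t`. -/
def DTV {X : Type*} [Fintype X] (p : X -> X -> Real) (pi : X -> Real) (t : Nat) : Real :=
  ⨆ x0 : X, tvDist (evolve p (delta x0) t) pi

/-- Mixing time `T^mix(eps)`. -/
def Tmix {X : Type*} [Fintype X] (p : X -> X -> Real) (pi : X -> Real) (eps : Real) : Nat :=
  sInf {t : Nat | DTV p pi t ≤ eps}

/-- Probability of a given trajectory `w` of length `T` for the chain started at `x0`. -/
def pathProb {X : Type*} [Fintype X] (p : X -> X -> Real) (x0 : X) (T : Nat)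
    (w : Fin (T+1) -> X) : Real :=
  (if w 0 = x0 then 1 else 0) * ∏ t : Fin T, p (w t.castSucc) (w t.succ)

/-- Probability that some state visited up to time `T` satisfies `Bad`. -/
def hitProb {X : Type*} [Fintype X] (p : X -> X -> Real) (x0 : X) (T : Nat)
    (Bad : X -> Prop) : Real :=
  ∑ w : Fin (T+1) -> X, (if ∃ t, Bad (w t) then pathProb p x0 T w else 0)

/-! ### The load profile chain -/

/-- Load profiles: `xi : S -> {0,...,kappa}` with `∑ xi v = n`, where `S = Fin Q`. -/
abbrev LoadState (Q kap n : Nat) := {xi : Fin Q -> Fin (kap+1) // (∑ v, ((xi v : Nat))) = n}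

/-- Transition matrix of the load profile chain on `Xi_{n,S,kappa}`. -/
def loadP (Q kap n : Nat) (xi xi' : LoadState Q kap n) : Real :=
  if xi' = xi then
    (∑ v, ((xi.1 v : Nat) : Real) * (((1 + kap - (xi.1 v : Nat) : Nat)) : Real))
      / ((n : Real) * ((1 + kap * Q - n : Nat) : Real))
  else
    (∑ vm, ∑ vp,
      if vm ≠ vp ∧ (xi'.1 vm : Nat) + 1 = (xi.1 vm : Nat) ∧ (xi'.1 vp : Nat) = (xi.1 vp : Nat) + 1 ∧
          (∀ v, v ≠ vm -> v ≠ vp -> xi'.1 v = xi.1 v)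
        then ((xi.1 vm : Nat) : Real) * (((kap - (xi.1 vp : Nat) : Nat)) : Real) else 0)
      / ((n : Real) * ((1 + kap * Q - n : Nat) : Real))

/-- Stationary weight `∏_v 1/(xi_v! (kappa - xi_v)!)`. -/
def loadWeight (Q kap n : Nat) (xi : LoadState Q kap n) : Real :=
  ∏ v, (1 : Real) /
    ((Nat.factorial (xi.1 v : Nat) : Real) * (Nat.factorial (kap - (xi.1 v : Nat)) : Real))

/-- The stationary distribution `pi_n` of the load profile chain. -/
def loadPi (Q kap n : Nat) (xi : LoadState Q kap n) : Real :=
  loadWeight Q kap n xi / (∑ eta : LoadState Q kap n, loadWeight Q kap n eta)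

/-- `xi ∈ Xi(delta)`: the normalized load profile is within Euclidean distance `delta`
of the constant vector `(rho/Q)_v`. -/
def loadNear (Q kap n : Nat) (rho : Real) (xi : LoadState Q kap n) (del : Real) : Prop :=
  Real.sqrt (∑ v, (((xi.1 v : Nat) : Real) / ((kap * Q : Nat) : Real) - rho / (Q : Real))^2) ≤ del

/-- `D(xi, xi') = (1/2) ∑_v |xi_v - xi'_v|`. -/
def loadD (Q kap n : Nat) (xi xi' : LoadState Q kap n) : Real :=
  (1/2) * ∑ v, |((xi.1 v : Nat) : Real) - ((xi'.1 v : Nat) : Real)|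

/-! ### The congestion dynamics (Glauber dynamics) -/

/-- `xi_v(sigma)`: the number of players adopting resource `v`. -/
def xiCount {Q n : Nat} (sg : Fin n -> Fin Q) (v : Fin Q) : Nat :=
  (Finset.univ.filter fun i => sg i = v).card

/-- Configurations: `sigma : [n] -> S` with `xi_v(sigma) ≤ kappa` for every `v`. -/
abbrev ConfigState (Q kap n : Nat) := {sg : Fin n -> Fin Q // ∀ v, xiCount sg v ≤ kap}

/-- Transition matrix of the congestion dynamics. -/
def configP (Q kap n : Nat) (sg sg' : ConfigState Q kap n) : Real :=
  if sg' = sg then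
    (∑ i, ((1 + kap - xiCount sg.1 (sg.1 i) : Nat) : Real))
      / ((n : Real) * ((1 + kap * Q - n : Nat) : Real))
  else
    (∑ i, if sg'.1 i ≠ sg.1 i ∧ (∀ j, j ≠ i -> sg'.1 j = sg.1 j)
        then ((kap - xiCount sg.1 (sg'.1 i) : Nat) : Real) else 0)
      / ((n : Real) * ((1 + kap * Q - n : Nat) : Real))

/-- The potential `F(sigma) = ∑_v ∑_{s=0}^{xi_v(sigma)} (log(kappa+1) - log(kappa+1-s))`. -/
def potF (Q kap n : Nat) (sg : ConfigState Q kap n) : Real :=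
  ∑ v, ∑ s ∈ Finset.range (xiCount sg.1 v + 1),
    (Real.log ((kap : Real) + 1) - Real.log ((kap : Real) + 1 - (s : Real)))

/-- The Gibbs measure `mu_n(sigma) = e^{-F(sigma)}/Z_n`. -/
def gibbs (Q kap n : Nat) (sg : ConfigState Q kap n) : Real :=
  Real.exp (-(potF Q kap n sg)) / (∑ ta : ConfigState Q kap n, Real.exp (-(potF Q kap n ta)))

/-- `sigma ∈ S(delta)`. -/
def configNear (Q kap n : Nat) (rho : Real) (sg : ConfigState Q kap n) (del : Real) : Prop :=
  Real.sqrt (∑ v, ((xiCount sg.1 v : Real) / ((kap * Q : Nat) : Real) - rho / (Q : Real))^2) ≤ del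

/-- The load matrix `xi^{sigma0}_{u,v}(sigma)`. -/
def ximat {Q n : Nat} (sg0 sg : Fin n -> Fin Q) (u v : Fin Q) : Nat :=
  (Finset.univ.filter fun i => sg0 i = u ∧ sg i = v).card

/-- `sigma ∈ S(sigma0, delta)`: for each `u`, the normalized `u`-th row of the
load matrix is within Euclidean distance `delta` of the constant vector `(1/Q)_v`. -/
def configNearMat (Q kap n : Nat) (sg0 sg : ConfigState Q kap n) (del : Real) : Prop :=
  ∀ u, Real.sqrt
      (∑ v, ((ximat sg0.1 sg.1 u v : Real) / (xiCount sg0.1 u : Real) - 1 / (Q : Real))^2) ≤ del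

/-- `D^{sigma0}(sigma, sigma') = ∑_u (1/2) ∑_v |xi^{sigma0}_{u,v}(sigma) - xi^{sigma0}_{u,v}(sigma')|`. -/
def matD (Q kap n : Nat) (sg0 sg sg' : ConfigState Q kap n) : Real :=
  ∑ u, (1/2) * ∑ v, |(ximat sg0.1 sg.1 u v : Real) - (ximat sg0.1 sg'.1 u v : Real)|

/-- The constant `cStar = (sqrt Q/(1-rho) + rho/(2Q))^{1/2}`. -/
def cStar (Q : Nat) (rho : Real) : Real :=
  Real.sqrt (Real.sqrt (Q : Real) / (1 - rho) + rho / (2 * (Q : Real)))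

/-! ### The base-exchange chain on `B^(Q)(n)` -/

/-- `B^(Q)(n) = {x ∈ Z_{≥0}^Q : ∑ x_i = n}`. -/
abbrev BState (Q n : Nat) := {x : Fin Q -> Fin (n+1) // (∑ i, ((x i : Nat))) = n}

/-- Transition matrix of the base-exchange chain on `B^(Q)(n)`. -/
def baseP (Q n : Nat) (x y : BState Q n) : Real :=
  if y = x then
    ∑ i, (if 0 < (x.1 i : Nat) then (1 : Real) / ((Q : Real) * (Q : Real)) else (1 : Real) / (Q : Real))
  else
    ∑ i, ∑ j,
      if i ≠ j ∧ (y.1 i : Nat) + 1 = (x.1 i : Nat) ∧ (y.1 j : Nat) = (x.1 j : Nat) + 1 ∧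
          (∀ v, v ≠ i -> v ≠ j -> y.1 v = x.1 v)
        then (1 : Real) / ((Q : Real) * (Q : Real)) else 0

/-- The lazy version of the base-exchange chain. -/
def lazyBaseP (Q n : Nat) (x y : BState Q n) : Real :=
  (1/2) * (if y = x then 1 else 0) + (1/2) * baseP Q n x y

/-- The uniform distribution on `B^(Q)(n)`. -/
def unifB (Q n : Nat) (x : BState Q n) : Real := 1 / (Fintype.card (BState Q n) : Real)


/-! ### Finite Markov chains -/

section General

variable {X : Type*} [Fintype X]

lemma evolve_succ (p : X -> X -> Real) (mu : X -> Real) (t : Nat) (y : X) :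
    evolve p mu (t + 1) y = ∑ x, evolve p mu t x * p x y := rfl

lemma evolve_add (p : X -> X -> Real) (mu : X -> Real) (s t : Nat) :
    evolve p mu (s + t) = evolve p (evolve p mu s) t := by
  induction t with
  | zero => rfl
  | succ t ih =>
    funext y
    rw [← add_assoc, evolve_succ, evolve_succ, ih]

/-- The law at time `t` is the mixture of the laws started from point masses. -/
lemma evolve_eq_sum (p : X -> X -> Real) (mu : X -> Real) (t : Nat) (y : X) :
    evolve p mu t y = ∑ x, mu x * evolve p (delta x) t y := by
  induction t generalizing y with
  | zero => simp [evolve, delta]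
  | succ t ih =>
    simp only [evolve_succ]
    simp_rw [ih, Finset.sum_mul, Finset.mul_sum]
    rw [Finset.sum_comm]
    simp only [mul_assoc]

lemma evolve_sub (p : X -> X -> Real) (mu nu : X -> Real) (t : Nat) (y : X) :
    evolve p (mu - nu) t y = evolve p mu t y - evolve p nu t y := by
  rw [evolve_eq_sum, evolve_eq_sum p mu, evolve_eq_sum p nu, ← Finset.sum_sub_distrib]
  simp [sub_mul]

lemma evolve_stationary {p : X -> X -> Real} {mu : X -> Real}
    (h : ∀ y, ∑ x, mu x * p x y = mu y) (t : Nat) : evolve p mu t = mu := by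
  induction t with
  | zero => rfl
  | succ t ih => funext y; rw [evolve_succ, ih, h]

lemma evolve_nonneg {p : X -> X -> Real} (hp : ∀ x y, 0 ≤ p x y) {mu : X -> Real}
    (hmu : ∀ x, 0 ≤ mu x) (t : Nat) (y : X) : 0 ≤ evolve p mu t y := by
  induction t generalizing y with
  | zero => exact hmu y
  | succ t ih => exact Finset.sum_nonneg fun x _ => mul_nonneg (ih x) (hp x y)

lemma evolve_sum {p : X -> X -> Real} (hrow : ∀ x, ∑ y, p x y = 1) (mu : X -> Real) (t : Nat) :
    ∑ y, evolve p mu t y = ∑ y, mu y := by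
  induction t with
  | zero => rfl
  | succ t ih =>
    simp only [evolve_succ]
    rw [Finset.sum_comm, ← ih]
    simp [← Finset.mul_sum, hrow]

lemma delta_nonneg {X : Type*} (x y : X) : 0 ≤ delta x y := by
  unfold delta; split_ifs <;> norm_num

lemma delta_sum (x : X) : ∑ y, delta x y = 1 := by
  simp [delta]

lemma evolve_delta_step {p : X -> X -> Real} (hp : ∀ x y, 0 ≤ p x y) {x y z : X} {t : Nat}
    (h : 0 < evolve p (delta x) t y) (h' : 0 < p y z) :
    0 < evolve p (delta x) (t + 1) z := by
  rw [evolve_succ]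
  exact Finset.sum_pos' (fun w _ => mul_nonneg (evolve_nonneg hp (delta_nonneg x) t w) (hp w z))
    ⟨y, Finset.mem_univ y, mul_pos h h'⟩

lemma evolve_delta_one (p : X -> X -> Real) (x y : X) : evolve p (delta x) 1 y = p x y := by
  rw [evolve_succ]; simp [evolve, delta]

lemma exists_evolve_pos_of_reflTransGen {p : X -> X -> Real} (hp : ∀ x y, 0 ≤ p x y) {x y : X}
    (h : Relation.ReflTransGen (fun a b => 0 < p a b) x y) :
    ∃ t, 0 < evolve p (delta x) t y := by
  induction h with
  | refl => exact ⟨0, by simp [evolve, delta]⟩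
  | tail _ hbc ih =>
    obtain ⟨t, ht⟩ := ih
    exact ⟨t + 1, evolve_delta_step hp ht hbc⟩

/-- An irreducible chain with positive holding probabilities has, at some common time `T`, all
its `T`-step transition probabilities bounded below by a positive constant. -/
lemma exists_minorization [Nonempty X] {p : X -> X -> Real} (hp : ∀ x y, 0 ≤ p x y)
    (hdiag : ∀ x, 0 < p x x) (hirr : ∀ x y, ∃ t, 0 < evolve p (delta x) t y) :
    ∃ T, ∃ ε > 0, ∀ x y, ε ≤ evolve p (delta x) T y := by
  choose τ hτ using hirr
  have hmono : ∀ x y s, 0 < evolve p (delta x) (τ x y + s) y := by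
    intro x y s
    induction s with
    | zero => exact hτ x y
    | succ s ih => exact evolve_delta_step hp ih (hdiag y)
  refine ⟨∑ x, ∑ y, τ x y, ?_⟩
  have hle : ∀ x y, τ x y ≤ ∑ x, ∑ y, τ x y := fun x y =>
    (Finset.single_le_sum (f := fun y => τ x y) (fun _ _ => Nat.zero_le _)
      (Finset.mem_univ y)).trans
    (Finset.single_le_sum (f := fun x => ∑ y, τ x y) (fun _ _ => Nat.zero_le _)
      (Finset.mem_univ x))
  have hpos : ∀ x y, 0 < evolve p (delta x) (∑ x, ∑ y, τ x y) y := by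
    intro x y
    obtain ⟨s, hs⟩ := Nat.exists_eq_add_of_le (hle x y)
    rw [hs]; exact hmono x y s
  obtain ⟨z, hz⟩ := Finite.exists_min
    (fun z : X × X => evolve p (delta z.1) (∑ x, ∑ y, τ x y) z.2)
  exact ⟨_, hpos z.1 z.2, fun x y => hz (x, y)⟩

/-- If every `T`-step transition probability is at least `ε`, then `T` steps contract the `ℓ¹` norm
of a signed measure of total mass zero by the factor `1 - |X| ε`: subtracting the constant `ε` from
the kernel does not change its action on such a measure. -/
lemma evolve_l1_contract {p : X -> X -> Real} (hrow : ∀ x, ∑ y, p x y = 1) {T : Nat} {ε : Real}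
    (hε : ∀ x y, ε ≤ evolve p (delta x) T y) {f : X -> Real} (hf : ∑ x, f x = 0) :
    ∑ y, |evolve p f T y| ≤ (1 - Fintype.card X * ε) * ∑ y, |f y| := by
  calc ∑ y, |evolve p f T y|
      = ∑ y, |∑ x, f x * (evolve p (delta x) T y - ε)| := by
        refine Finset.sum_congr rfl fun y _ => ?_
        rw [evolve_eq_sum]
        simp only [mul_sub, Finset.sum_sub_distrib, ← Finset.sum_mul, hf, zero_mul, sub_zero]
    _ ≤ ∑ y, ∑ x, |f x| * (evolve p (delta x) T y - ε) := by
        refine Finset.sum_le_sum fun y _ => (Finset.abs_sum_le_sum_abs _ _).trans_eq ?_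
        refine Finset.sum_congr rfl fun x _ => ?_
        rw [abs_mul, abs_of_nonneg (sub_nonneg.2 (hε x y))]
    _ = (1 - Fintype.card X * ε) * ∑ y, |f y| := by
        rw [Finset.sum_comm, Finset.mul_sum]
        refine Finset.sum_congr rfl fun x _ => ?_
        rw [← Finset.mul_sum, Finset.sum_sub_distrib, evolve_sum hrow, delta_sum]
        simp [mul_comm]

/-- A signed measure of total mass zero is driven to zero by an irreducible chain with positive
holding probabilities. Its `ℓ¹` norm is nonincreasing in time, and its limit `L` satisfies
`L ≤ (1 - |X| ε) L` by the contraction over blocks of `T` steps. -/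
lemma evolve_tendsto_zero {p : X -> X -> Real} (hp : ∀ x y, 0 ≤ p x y)
    (hrow : ∀ x, ∑ y, p x y = 1) (hdiag : ∀ x, 0 < p x x)
    (hirr : ∀ x y, ∃ t, 0 < evolve p (delta x) t y) {f : X -> Real} (hf : ∑ x, f x = 0) (y : X) :
    Tendsto (fun t => evolve p f t y) atTop (nhds 0) := by
  have : Nonempty X := ⟨y⟩
  obtain ⟨T, ε, hε, hmin⟩ := exists_minorization hp hdiag hirr
  set D : Nat -> Real := fun t => ∑ z, |evolve p f t z| with hD
  have hmass : ∀ t, ∑ z, evolve p f t z = 0 := fun t => (evolve_sum hrow f t).trans hf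
  have hanti : Antitone D := by
    refine antitone_nat_of_succ_le fun t => ?_
    have h := evolve_l1_contract (T := 1) (ε := 0) hrow
      (fun x y => evolve_nonneg hp (delta_nonneg x) 1 y) (hmass t)
    rw [← evolve_add] at h
    simpa using h
  have hcontr : ∀ t, D (t + T) ≤ (1 - Fintype.card X * ε) * D t := by
    intro t
    have h := evolve_l1_contract hrow hmin (hmass t)
    rwa [← evolve_add] at h
  have hD0 : ∀ t, 0 ≤ D t := fun t => Finset.sum_nonneg fun _ _ => abs_nonneg _
  have hlim := tendsto_atTop_ciInf hanti ⟨0, by rintro _ ⟨t, rfl⟩; exact hD0 t⟩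
  set L := ⨅ t, D t
  have hL0 : 0 ≤ L := ge_of_tendsto' hlim hD0
  have hL : L ≤ (1 - Fintype.card X * ε) * L :=
    le_of_tendsto_of_tendsto' (hlim.comp (tendsto_add_atTop_nat T)) (hlim.const_mul _) hcontr
  have hc : 0 < (Fintype.card X : Real) * ε :=
    mul_pos (Nat.cast_pos.2 Fintype.card_pos) hε
  have hL1 : L = 0 := by nlinarith
  rw [hL1] at hlim
  refine squeeze_zero_norm (fun t => ?_) hlim
  rw [Real.norm_eq_abs]
  exact Finset.single_le_sum (f := fun z => |evolve p f t z|) (fun _ _ => abs_nonneg _)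
    (Finset.mem_univ y)

end General

/-! ### Counts and moves of a single player -/

section Config

variable {Q kap n : Nat}

/-- The number of players other than `i` adopting resource `v`. -/
def restCount (sg : Fin n -> Fin Q) (i : Fin n) (v : Fin Q) : Nat :=
  (Finset.univ.filter fun j => j ≠ i ∧ sg j = v).card

lemma xiCount_eq_restCount (sg : Fin n -> Fin Q) (i : Fin n) (v : Fin Q) :
    xiCount sg v = restCount sg i v + if sg i = v then 1 else 0 := by
  unfold xiCount restCount
  have h := Finset.card_filter_add_card_filter_not
    (s := Finset.univ.filter fun j => sg j = v) (fun j => j ≠ i)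
  rw [← h, Finset.filter_filter, Finset.filter_filter]
  congr 1
  · congr 1; ext j; simp [and_comm]
  · split_ifs with hi
    · rw [Finset.card_eq_one]; exact ⟨i, by ext j; simp; grind⟩
    · rw [Finset.card_eq_zero]; ext j; simp; grind

lemma restCount_congr {sg sg' : Fin n -> Fin Q} {i : Fin n} (h : ∀ j, j ≠ i → sg' j = sg j)
    (v : Fin Q) : restCount sg' i v = restCount sg i v := by
  unfold restCount
  congr 1; ext j; simp; grind

lemma xiCount_update (sg : Fin n -> Fin Q) (i : Fin n) (w v : Fin Q) :
    xiCount (Function.update sg i w) v = restCount sg i v + if w = v then 1 else 0 := by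
  rw [xiCount_eq_restCount _ i, restCount_congr (sg := sg) (fun j hj => by simp [hj])]
  simp

lemma sum_xiCount (sg : Fin n -> Fin Q) : ∑ v, xiCount sg v = n := by
  unfold xiCount
  have h := Finset.card_eq_sum_card_fiberwise (f := sg) (s := Finset.univ) (t := Finset.univ)
    (fun _ _ => Finset.mem_coe.2 (Finset.mem_univ _))
  simpa using h.symm

lemma update_mem (sg : ConfigState Q kap n) (i : Fin n) {w : Fin Q} (hw : xiCount sg.1 w < kap)
    (v : Fin Q) : xiCount (Function.update sg.1 i w) v ≤ kap := by
  rw [xiCount_update]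
  have h1 := xiCount_eq_restCount sg.1 i v
  have h2 := sg.2 v
  split_ifs with h
  · subst h; omega
  · omega

/-- The configuration obtained from `sg` by moving player `i` to the non-full resource `w`. -/
def move (sg : ConfigState Q kap n) (i : Fin n) (w : Fin Q) (hw : xiCount sg.1 w < kap) :
    ConfigState Q kap n :=
  ⟨Function.update sg.1 i w, update_mem sg i hw⟩

lemma configP_nonneg (sg sg' : ConfigState Q kap n) : 0 ≤ configP Q kap n sg sg' := by
  unfold configP
  split_ifs
  · positivity
  · refine div_nonneg (Finset.sum_nonneg fun i _ => ?_) (by positivity)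
    split_ifs <;> positivity

lemma denom_pos (hn : 0 < n) (hnN : n < kap * Q) :
    0 < (n : Real) * ((1 + kap * Q - n : Nat) : Real) :=
  mul_pos (by exact_mod_cast hn) (by exact_mod_cast (by omega : 0 < 1 + kap * Q - n))

lemma configP_self_pos (hn : 0 < n) (hnN : n < kap * Q) (sg : ConfigState Q kap n) :
    0 < configP Q kap n sg sg := by
  rw [configP, if_pos rfl]
  refine div_pos (Finset.sum_pos (fun i _ => ?_) ⟨⟨0, hn⟩, Finset.mem_univ _⟩)
    (denom_pos hn hnN)
  have := sg.2 (sg.1 i)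
  exact_mod_cast (by omega : 0 < 1 + kap - xiCount sg.1 (sg.1 i))

/-- Off the diagonal at most one player contributes to the sum in `configP`. -/
lemma configP_of_differ {sg sg' : ConfigState Q kap n} {i : Fin n} (hi : sg'.1 i ≠ sg.1 i)
    (h : ∀ j, j ≠ i → sg'.1 j = sg.1 j) :
    configP Q kap n sg sg' = ((kap - xiCount sg.1 (sg'.1 i) : Nat) : Real)
      / ((n : Real) * ((1 + kap * Q - n : Nat) : Real)) := by
  have hne : sg' ≠ sg := fun e => hi (by rw [e])
  rw [configP, if_neg hne, Finset.sum_eq_single i]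
  · rw [if_pos ⟨hi, h⟩]
  · intro k _ hk
    exact if_neg fun hc => hc.1 (h k hk)
  · simp

lemma configP_eq_zero {sg sg' : ConfigState Q kap n} (hne : sg' ≠ sg)
    (h : ¬ ∃ i, sg'.1 i ≠ sg.1 i ∧ ∀ j, j ≠ i → sg'.1 j = sg.1 j) :
    configP Q kap n sg sg' = 0 := by
  rw [configP, if_neg hne, Finset.sum_eq_zero, zero_div]
  intro i _
  exact if_neg fun hc => h ⟨i, hc⟩

lemma configP_move_pos (hn : 0 < n) (hnN : n < kap * Q) (sg : ConfigState Q kap n) (i : Fin n)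
    {w : Fin Q} (hw : xiCount sg.1 w < kap) (hne : w ≠ sg.1 i) :
    0 < configP Q kap n sg (move sg i w hw) := by
  rw [configP_of_differ (i := i) (by simpa [move] using hne) (fun j hj => by simp [move, hj])]
  refine div_pos ?_ (denom_pos hn hnN)
  have h : xiCount sg.1 ((move sg i w hw).1 i) < kap := by simpa [move] using hw
  exact_mod_cast Nat.sub_pos_of_lt h

/-- The transition probabilities out of `sg` sum to one: given player `i`, the weights
`1 + κ - ξ_{σ_i}` of staying and `κ - ξ_v` of moving to `v ≠ σ_i` add up to `1 + N - n`. -/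
lemma configP_row_sum (hn : 0 < n) (hnN : n < kap * Q) (sg : ConfigState Q kap n) :
    ∑ sg', configP Q kap n sg sg' = 1 := by
  have hpoint : ∀ sg' : ConfigState Q kap n, configP Q kap n sg sg' =
      ((if sg' = sg then ∑ i, ((1 + kap - xiCount sg.1 (sg.1 i) : Nat) : Real) else 0) +
        ∑ i, if sg'.1 i ≠ sg.1 i ∧ (∀ j, j ≠ i -> sg'.1 j = sg.1 j)
          then ((kap - xiCount sg.1 (sg'.1 i) : Nat) : Real) else 0)
        / ((n : Real) * ((1 + kap * Q - n : Nat) : Real)) := by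
    intro sg'
    unfold configP
    by_cases h : sg' = sg
    · subst h; simp
    · simp [h]
  -- A full resource `v` has weight zero, so the sum over admissible targets may run over all `v`.
  have hmoves : ∀ i, (∑ sg' : ConfigState Q kap n,
      if sg'.1 i ≠ sg.1 i ∧ (∀ j, j ≠ i -> sg'.1 j = sg.1 j)
          then ((kap - xiCount sg.1 (sg'.1 i) : Nat) : Real) else 0) =
      ∑ v, if v ≠ sg.1 i then ((kap - xiCount sg.1 v : Nat) : Real) else 0 := by
    intro i
    symm
    have hlt : ∀ v, (if v ≠ sg.1 i then ((kap - xiCount sg.1 v : Nat) : Real) else 0) ≠ 0 →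
        v ≠ sg.1 i ∧ xiCount sg.1 v < kap := by
      intro v hv
      by_cases h : v ≠ sg.1 i
      · rw [if_pos h, Nat.cast_ne_zero] at hv
        exact ⟨h, by omega⟩
      · simp [h] at hv
    refine Finset.sum_bij_ne_zero (fun v _ hv => move sg i v (hlt v hv).2)
      (fun _ _ _ => Finset.mem_univ _) ?_ ?_ ?_
    · intro v _ hv w _ hw he
      have := congrFun (congrArg Subtype.val he) i
      simpa [move] using this
    · intro sg' _ hsg'
      have hc : sg'.1 i ≠ sg.1 i ∧ (∀ j, j ≠ i -> sg'.1 j = sg.1 j) := by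
        by_contra hc
        rw [if_neg hc] at hsg'
        exact hsg' rfl
      rw [if_pos hc] at hsg'
      refine ⟨sg'.1 i, Finset.mem_univ _, by rw [if_pos hc.1]; exact hsg', ?_⟩
      apply Subtype.ext
      funext j
      by_cases hj : j = i
      · subst hj; simp [move]
      · simp [move, hj, hc.2 j hj]
    · intro v _ hv
      have hv' := (hlt v hv).1
      rw [if_pos hv', if_pos]
      · simp [move]
      · exact ⟨by simpa [move] using hv', fun j hj => by simp [move, hj]⟩
  have hplayer : ∀ i, ((1 + kap - xiCount sg.1 (sg.1 i) : Nat) : Real) +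
      (∑ v, if v ≠ sg.1 i then ((kap - xiCount sg.1 v : Nat) : Real) else 0) =
      ((1 + kap * Q - n : Nat) : Real) := by
    intro i
    have h1 : ∀ v, ((kap - xiCount sg.1 v : Nat) : Real) = kap - xiCount sg.1 v :=
      fun v => Nat.cast_sub (sg.2 v)
    have h2 : ((1 + kap - xiCount sg.1 (sg.1 i) : Nat) : Real)
        = 1 + kap - xiCount sg.1 (sg.1 i) := by
      rw [Nat.cast_sub ((sg.2 _).trans (by omega))]; push_cast; ring
    have h3 : ((1 + kap * Q - n : Nat) : Real) = 1 + kap * Q - n := by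
      rw [Nat.cast_sub (by omega)]; push_cast; ring
    have h4 : (∑ v, (xiCount sg.1 v : Real)) = n := by exact_mod_cast sum_xiCount sg.1
    have h5 : (∑ v, if v ≠ sg.1 i then ((kap : Real) - xiCount sg.1 v) else 0) =
        (∑ v, ((kap : Real) - xiCount sg.1 v)) - (kap - xiCount sg.1 (sg.1 i)) := by
      rw [← Finset.sum_filter, Finset.filter_ne' Finset.univ (sg.1 i),
        Finset.sum_erase_eq_sub (Finset.mem_univ _)]
    simp only [h1, h2, h3, h5, Finset.sum_sub_distrib, h4]
    simp
    ring
  simp only [hpoint]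
  rw [← Finset.sum_div, Finset.sum_add_distrib, Finset.sum_comm]
  simp only [hmoves]
  rw [Finset.sum_ite_eq' Finset.univ sg, if_pos (Finset.mem_univ _), ← Finset.sum_add_distrib]
  simp only [hplayer]
  simp only [Finset.sum_const, Finset.card_univ, Fintype.card_fin, nsmul_eq_mul]
  exact div_self (ne_of_gt (denom_pos hn hnN))

/-! ### Irreducibility -/

lemma exists_not_full (hnN : n < kap * Q) (sg : ConfigState Q kap n) :
    ∃ w, xiCount sg.1 w < kap := by
  by_contra! h
  have h1 : ∑ _v : Fin Q, kap ≤ ∑ v, xiCount sg.1 v := Finset.sum_le_sum fun v _ => h v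
  rw [sum_xiCount] at h1
  simp at h1
  nlinarith

/-- The set of players on which two configurations disagree. -/
def disagree (sg ta : ConfigState Q kap n) : Finset (Fin n) :=
  Finset.univ.filter fun i => sg.1 i ≠ ta.1 i

lemma mem_disagree {sg ta : ConfigState Q kap n} {i : Fin n} :
    i ∈ disagree sg ta ↔ sg.1 i ≠ ta.1 i := by
  simp [disagree]

lemma disagree_move_subset (sg ta : ConfigState Q kap n) {i : Fin n} {w : Fin Q}
    (hw : xiCount sg.1 w < kap) (hi : sg.1 i ≠ ta.1 i) :
    disagree (move sg i w hw) ta ⊆ disagree sg ta := by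
  intro j
  rw [mem_disagree, mem_disagree]
  by_cases hj : j = i
  · subst hj; exact fun _ => hi
  · simp [move, hj]

lemma disagree_move_card_lt (sg ta : ConfigState Q kap n) {i : Fin n}
    (hw : xiCount sg.1 (ta.1 i) < kap) (hi : sg.1 i ≠ ta.1 i) :
    (disagree (move sg i (ta.1 i) hw) ta).card < (disagree sg ta).card := by
  refine Finset.card_lt_card ((Finset.ssubset_iff_of_subset (disagree_move_subset sg ta hw hi)).2
    ⟨i, ?_, ?_⟩)
  · rwa [mem_disagree]
  · simp [mem_disagree, move]

/-- Any configuration leads to any other. If player `i` is misplaced and the target resource `τ_i`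
is full, then it holds another misplaced player `j`; moving `j` to a non-full resource makes room
for `i` without creating a disagreement. -/
lemma reachable (hn : 0 < n) (hnN : n < kap * Q) (sg ta : ConfigState Q kap n) :
    Relation.ReflTransGen (fun a b => 0 < configP Q kap n a b) sg ta := by
  induction hm : (disagree sg ta).card using Nat.strong_induction_on generalizing sg with
  | _ m ih =>
  subst hm
  by_cases heq : sg = ta
  · subst heq; exact .refl
  obtain ⟨i, hi⟩ : ∃ i, sg.1 i ≠ ta.1 i := by
    by_contra! h
    exact heq (Subtype.ext (funext h))
  by_cases hfull : xiCount sg.1 (ta.1 i) < kap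
  · exact .head (configP_move_pos hn hnN sg i hfull hi.symm)
      (ih _ (disagree_move_card_lt sg ta hfull hi) _ rfl)
  obtain ⟨j, hj, hj'⟩ : ∃ j, sg.1 j = ta.1 i ∧ ta.1 j ≠ ta.1 i := by
    by_contra! h
    have hlt : xiCount sg.1 (ta.1 i) < xiCount ta.1 (ta.1 i) := by
      refine Finset.card_lt_card ((Finset.ssubset_iff_of_subset ?_).2 ⟨i, by simp, by simpa⟩)
      intro j hj
      simp only [Finset.mem_filter, Finset.mem_univ, true_and] at hj ⊢
      exact h j hj
    have := ta.2 (ta.1 i)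
    omega
  obtain ⟨w, hw⟩ := exists_not_full hnN sg
  have hwi : w ≠ ta.1 i := by rintro rfl; exact hfull hw
  have hij : i ≠ j := by rintro rfl; exact hi hj
  have hjd : sg.1 j ≠ ta.1 j := by rw [hj]; exact hj'.symm
  have hroom : xiCount (move sg j w hw).1 (ta.1 i) < kap := by
    have h1 := xiCount_eq_restCount sg.1 j (ta.1 i)
    have h2 := xiCount_update sg.1 j w (ta.1 i)
    have h3 := sg.2 (ta.1 i)
    rw [if_pos hj] at h1
    rw [if_neg hwi] at h2
    change xiCount (Function.update sg.1 j w) (ta.1 i) < kap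
    omega
  have hi' : (move sg j w hw).1 i ≠ ta.1 i := by simpa [move, hij] using hi
  refine .head (configP_move_pos hn hnN sg j hw (by rw [hj]; exact hwi))
    (.head (configP_move_pos hn hnN _ i hroom hi'.symm) (ih _ ?_ _ rfl))
  exact (disagree_move_card_lt _ ta hroom hi').trans_le
    (Finset.card_le_card (disagree_move_subset sg ta hw hjd))

/-! ### The Gibbs measure -/

/-- The Gibbs weight of a single resource used by `m` players. -/
def siteWeight (kap m : Nat) : Real :=
  Real.exp (-∑ s ∈ Finset.range (m + 1),
    (Real.log ((kap : Real) + 1) - Real.log ((kap : Real) + 1 - (s : Real))))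

lemma siteWeight_succ {m : Nat} (hm : m < kap) :
    siteWeight kap (m + 1) = siteWeight kap m * (((kap - m : Nat) : Real) / (kap + 1)) := by
  unfold siteWeight
  have h1 : (0 : Real) < kap + 1 := by positivity
  have h2 : (0 : Real) < ((kap - m : Nat) : Real) := by exact_mod_cast Nat.sub_pos_of_lt hm
  have h3 : (kap : Real) + 1 - ((m + 1 : Nat) : Real) = ((kap - m : Nat) : Real) := by
    rw [Nat.cast_sub hm.le]; push_cast; ring
  rw [Finset.sum_range_succ _ (m + 1), neg_add, Real.exp_add, h3, neg_sub, Real.exp_sub,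
    Real.exp_log h1, Real.exp_log h2]

lemma exp_potF (sg : ConfigState Q kap n) :
    Real.exp (-(potF Q kap n sg)) = ∏ v, siteWeight kap (xiCount sg.1 v) := by
  unfold potF siteWeight
  rw [← Finset.sum_neg_distrib, Real.exp_sum]

/-- The Gibbs weight in terms of the loads created by the players other than `i`. -/
lemma exp_potF_eq (sg : ConfigState Q kap n) (i : Fin n) :
    Real.exp (-(potF Q kap n sg)) = (∏ v, siteWeight kap (restCount sg.1 i v)) *
      (((kap - restCount sg.1 i (sg.1 i) : Nat) : Real) / (kap + 1)) := by
  have hlt : restCount sg.1 i (sg.1 i) < kap := by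
    have h1 := xiCount_eq_restCount sg.1 i (sg.1 i)
    have h2 := sg.2 (sg.1 i)
    rw [if_pos rfl] at h1
    omega
  rw [exp_potF, ← Finset.mul_prod_erase _ _ (Finset.mem_univ (sg.1 i)),
    ← Finset.mul_prod_erase _ (fun v => siteWeight kap (restCount sg.1 i v))
      (Finset.mem_univ (sg.1 i)), xiCount_eq_restCount sg.1 i (sg.1 i), if_pos rfl,
    siteWeight_succ hlt]
  have hrest : ∏ v ∈ Finset.univ.erase (sg.1 i), siteWeight kap (xiCount sg.1 v) =
      ∏ v ∈ Finset.univ.erase (sg.1 i), siteWeight kap (restCount sg.1 i v) := by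
    refine Finset.prod_congr rfl fun v hv => ?_
    rw [xiCount_eq_restCount sg.1 i v, if_neg (Finset.ne_of_mem_erase hv).symm, add_zero]
  rw [hrest]
  ring

/-- Detailed balance. If `sg` and `sg'` differ at player `i` only and `η` counts the other players,
both sides are proportional to `(κ - η_{σ_i}) (κ - η_{σ'_i})`. -/
lemma gibbs_reversible (sg sg' : ConfigState Q kap n) :
    gibbs Q kap n sg * configP Q kap n sg sg' = gibbs Q kap n sg' * configP Q kap n sg' sg := by
  by_cases hne : sg' = sg
  · rw [hne]
  by_cases h : ∃ i, sg'.1 i ≠ sg.1 i ∧ ∀ j, j ≠ i → sg'.1 j = sg.1 j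
  · obtain ⟨i, hi, hj⟩ := h
    rw [configP_of_differ hi hj, configP_of_differ hi.symm (fun j hij => (hj j hij).symm)]
    unfold gibbs
    rw [exp_potF_eq sg i, exp_potF_eq sg' i, xiCount_eq_restCount sg.1 i (sg'.1 i),
      xiCount_eq_restCount sg'.1 i (sg.1 i), if_neg hi.symm, if_neg hi]
    simp only [restCount_congr hj, add_zero]
    ring
  · have h' : ¬ ∃ i, sg.1 i ≠ sg'.1 i ∧ ∀ j, j ≠ i → sg.1 j = sg'.1 j := by
      rintro ⟨i, hi, hj⟩
      exact h ⟨i, hi.symm, fun j hij => (hj j hij).symm⟩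
    rw [configP_eq_zero hne h, configP_eq_zero (Ne.symm hne) h', mul_zero, mul_zero]

lemma gibbs_stationary (hn : 0 < n) (hnN : n < kap * Q) (sg' : ConfigState Q kap n) :
    ∑ sg, gibbs Q kap n sg * configP Q kap n sg sg' = gibbs Q kap n sg' := by
  simp only [gibbs_reversible _ sg']
  rw [← Finset.mul_sum, configP_row_sum hn hnN, mul_one]

lemma gibbs_sum [Nonempty (ConfigState Q kap n)] : ∑ sg, gibbs Q kap n sg = 1 := by
  unfold gibbs
  rw [← Finset.sum_div]
  exact div_self (ne_of_gt
    (Finset.sum_pos (fun _ _ => Real.exp_pos _) Finset.univ_nonempty))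

/-- The laws started from any initial vector of total mass one converge to the Gibbs measure. -/
lemma evolve_tendsto_gibbs (hn : 0 < n) (hnN : n < kap * Q) {mu : ConfigState Q kap n → Real}
    (hmu : ∑ sg, mu sg = 1) (sg : ConfigState Q kap n) :
    Tendsto (fun t => evolve (configP Q kap n) mu t sg) atTop (nhds (gibbs Q kap n sg)) := by
  have : Nonempty (ConfigState Q kap n) := ⟨sg⟩
  have h := evolve_tendsto_zero configP_nonneg (configP_row_sum hn hnN) (configP_self_pos hn hnN)
    (fun x y => exists_evolve_pos_of_reflTransGen configP_nonneg (reachable hn hnN x y))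
    (f := mu - gibbs Q kap n) (by simp [hmu, gibbs_sum]) sg
  simp only [evolve_sub, evolve_stationary (gibbs_stationary hn hnN)] at h
  simpa using h.add_const (gibbs Q kap n sg)

end Config

/-- the congestion dynamics is irreducible, aperiodic and reversible
with respect to the Gibbs measure; hence the Gibbs measure is the unique stationary
distribution and the law of the chain converges to it from every initial state. -/
theorem statement16 (Q : Nat) (hQ : 2 ≤ Q) (kap n : Nat) (hkap : 0 < kap) (hn : 0 < n)
    (hnN : n < kap * Q) :
    (∀ sg ta : ConfigState Q kap n, ∃ t : Nat, 0 < evolve (configP Q kap n) (delta sg) t ta) ∧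
    (∀ sg : ConfigState Q kap n,
      sSup {d : Nat | ∀ t : Nat, 0 < t →
        0 < evolve (configP Q kap n) (delta sg) t sg → d ∣ t} = 1) ∧
    (∀ sg sg' : ConfigState Q kap n,
      gibbs Q kap n sg * configP Q kap n sg sg' = gibbs Q kap n sg' * configP Q kap n sg' sg) ∧
    (∀ sg' : ConfigState Q kap n,
      (∑ sg : ConfigState Q kap n, gibbs Q kap n sg * configP Q kap n sg sg')
        = gibbs Q kap n sg') ∧
    (∀ nu : ConfigState Q kap n → Real, (∀ sg, 0 ≤ nu sg) → (∑ sg, nu sg) = 1 →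
      (∀ sg' : ConfigState Q kap n, (∑ sg, nu sg * configP Q kap n sg sg') = nu sg') →
      nu = gibbs Q kap n) ∧
    (∀ sg0 sg : ConfigState Q kap n,
      Filter.Tendsto (fun t => evolve (configP Q kap n) (delta sg0) t sg)
        Filter.atTop (nhds (gibbs Q kap n sg))) := by
  refine ⟨fun sg ta => exists_evolve_pos_of_reflTransGen configP_nonneg (reachable hn hnN sg ta),
    fun sg => ?_, gibbs_reversible, gibbs_stationary hn hnN, fun nu _ hnu hst => ?_,
    fun sg0 sg => evolve_tendsto_gibbs hn hnN (delta_sum sg0) sg⟩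
  -- A return in one step has positive probability, so `1` is the only common divisor.
  · have hset : {d : Nat | ∀ t : Nat, 0 < t →
        0 < evolve (configP Q kap n) (delta sg) t sg → d ∣ t} = {1} := by
      ext d
      simp only [Set.mem_ofPred_eq, Set.mem_singleton_iff]
      refine ⟨fun h => Nat.dvd_one.1 (h 1 one_pos ?_), fun h t _ _ => h ▸ one_dvd t⟩
      rw [evolve_delta_one]
      exact configP_self_pos hn hnN sg
    rw [hset, csSup_singleton]
  · funext sg
    have h := evolve_tendsto_gibbs hn hnN hnu sg
    simp only [evolve_stationary hst] at h
    exact tendsto_nhds_unique tendsto_const_nhds h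

end CongestionPaper
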